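/- For every real μ and all (x, y, z) ∈ ℝ³, the second polar of F_{-2} with respect to the point E = (-1, μ, 0) satisfies (1/3)·∇F_{-2}(-1, μ, 0)·(x, y, z) = 3μ(μ - 2)·x + 3(1 - 2μ)·y - (μ² - 4μ + 1)·z. This linear form vanishes at the centroid (1/3, 1/3, 1); consequently, if 1/2 < μ < 2, then its value at every point (x, y, 1) with x > 1/3 and y > 1/3 is strictly negative. -/

import Mathlib

noncomputable section

/-- The cubic form `F k (x,y,z) = -x^3 - y^3 - (z-x-y)^3 + 3k x y (z-x-y)`. -/
def F (k x y z : ℝ) : ℝ := -x^3 - y^3 - (z - x - y)^3 + 3*k*x*y*(z - x - y)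

/-- Partial derivative with respect to the first variable. -/
def pdx (f : ℝ → ℝ → ℝ → ℝ) (x y z : ℝ) : ℝ := deriv (fun t => f t y z) x

/-- Partial derivative with respect to the second variable. -/
def pdy (f : ℝ → ℝ → ℝ → ℝ) (x y z : ℝ) : ℝ := deriv (fun t => f x t z) y

/-- Partial derivative with respect to the third variable. -/
def pdz (f : ℝ → ℝ → ℝ → ℝ) (x y z : ℝ) : ℝ := deriv (fun t => f x y t) z

/-- The Hessian determinant of a function of three real variables: the determinant of
the 3×3 matrix of its second partial derivatives. -/
def hessDet (f : ℝ → ℝ → ℝ → ℝ) (x y z : ℝ) : ℝ :=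
  !![pdx (pdx f) x y z, pdy (pdx f) x y z, pdz (pdx f) x y z;
     pdx (pdy f) x y z, pdy (pdy f) x y z, pdz (pdy f) x y z;
     pdx (pdz f) x y z, pdy (pdz f) x y z, pdz (pdz f) x y z].det

/-- The gradient of a function of three real variables. -/
def grad (f : ℝ → ℝ → ℝ → ℝ) (x y z : ℝ) : ℝ × ℝ × ℝ :=
  (pdx f x y z, pdy f x y z, pdz f x y z)

/-- The dot product on `ℝ × ℝ × ℝ`. -/
def dot (a b : ℝ × ℝ × ℝ) : ℝ := a.1 * b.1 + a.2.1 * b.2.1 + a.2.2 * b.2.2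

/-!
In the coordinates `x`, `y`, `w = z - x - y` the form `F k` is `-x³ - y³ - w³ + 3kxyw`, so at the
centroid, where `x = y = w = 1/3`, the second polar with respect to `(a, b, c)` equals a third of
`-(a² + b² + w²) + k(ab + bw + wa)`. For `k = -2` this is minus a perfect square,
`-(a + b + w)² / 3 = -c² / 3`. Hence for points on the line `c = 0`, such as `E`, the second polar
is a linear form vanishing at the centroid, and on `z = 1` its sign can be read off from the
coefficients of `x - 1/3` and `y - 1/3`.
-/

/-- The second polar `U²·D = (1/3) ∇f(U)·D` of a cubic form `f` with respect to `U = (a, b, c)`,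
as a function of `D`. The point `U` is curried to match `grad`. -/
def secondPolar (f : ℝ → ℝ → ℝ → ℝ) (a b c : ℝ) (D : ℝ × ℝ × ℝ) : ℝ :=
  (1 / 3) * dot (grad f a b c) D

lemma F_swap (k x y z : ℝ) : F k x y z = F k y x z := by
  unfold F
  ring

lemma pdx_F (k a b c : ℝ) :
    pdx (F k) a b c = 3 * ((c - a - b) ^ 2 - a ^ 2 + k * b * (c - 2 * a - b)) := by
  have hx : HasDerivAt (fun t : ℝ => t) 1 a := hasDerivAt_id' a
  have hw : HasDerivAt (fun t : ℝ => c - t - b) (-1) a := (hx.const_sub c).sub_const b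
  have hF : HasDerivAt (fun t => F k t b c) _ a :=
    (((hx.pow 3).neg.sub_const (b ^ 3)).sub (hw.pow 3)).add
      (((hx.const_mul (3 * k)).mul_const b).mul hw)
  refine hF.deriv.trans ?_
  push_cast
  ring

lemma pdy_F_eq_pdx_F (k a b c : ℝ) : pdy (F k) a b c = pdx (F k) b a c := by
  simp only [pdy, pdx, F_swap k a]

lemma pdz_F (k a b c : ℝ) : pdz (F k) a b c = 3 * (k * a * b - (c - a - b) ^ 2) := by
  have hw : HasDerivAt (fun t : ℝ => t - a - b) 1 c :=
    ((hasDerivAt_id' c).sub_const a).sub_const b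
  have hF : HasDerivAt (fun t => F k a b t) _ c :=
    ((hw.pow 3).const_sub (-a ^ 3 - b ^ 3)).add (hw.const_mul (3 * k * a * b))
  refine hF.deriv.trans ?_
  push_cast
  ring

lemma secondPolar_F (k a b c x y z : ℝ) :
    secondPolar (F k) a b c (x, y, z) =
      -(a ^ 2 * x + b ^ 2 * y + (c - a - b) ^ 2 * (z - x - y)) +
        k * (b * (c - a - b) * x + a * (c - a - b) * y + a * b * (z - x - y)) := by
  simp only [secondPolar, dot, grad, pdx_F, pdy_F_eq_pdx_F, pdz_F]
  ring

lemma secondPolar_F_neg_two (a b c x y z : ℝ) :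
    secondPolar (F (-2)) a b c (x, y, z) =
      (c - 2 * a - b) * (c - 3 * b) * (x - z / 3) + (c - a - 2 * b) * (c - 3 * a) * (y - z / 3) -
        c ^ 2 * z / 3 := by
  rw [secondPolar_F]
  ring

lemma secondPolar_F_neg_two_centroid (a b c : ℝ) :
    secondPolar (F (-2)) a b c (1 / 3, 1 / 3, 1) = -c ^ 2 / 3 := by
  rw [secondPolar_F_neg_two]
  ring

lemma secondPolar_F_neg_two_neg {a b x y z : ℝ} (ha : a * (a + 2 * b) < 0)
    (hb : b * (2 * a + b) < 0) (hx : z / 3 < x) (hy : z / 3 < y) :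
    secondPolar (F (-2)) a b 0 (x, y, z) < 0 := by
  have hxterm : b * (2 * a + b) * (x - z / 3) < 0 := mul_neg_of_neg_of_pos hb (sub_pos.2 hx)
  have hyterm : a * (a + 2 * b) * (y - z / 3) < 0 := mul_neg_of_neg_of_pos ha (sub_pos.2 hy)
  rw [secondPolar_F_neg_two]
  linarith

theorem stmt_18 (μ : ℝ) :
    (∀ x y z : ℝ, (1/3) * dot (grad (F (-2)) (-1) μ 0) (x, y, z)
      = 3*μ*(μ - 2)*x + 3*(1 - 2*μ)*y - (μ^2 - 4*μ + 1)*z) ∧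
    (1/3) * dot (grad (F (-2)) (-1) μ 0) (1/3, 1/3, 1) = 0 ∧
    (1/2 < μ → μ < 2 → ∀ x y : ℝ, 1/3 < x → 1/3 < y →
      (1/3) * dot (grad (F (-2)) (-1) μ 0) (x, y, 1) < 0) := by
  refine ⟨fun x y z => ?_, ?_, fun hμ hμ' x y hx hy => ?_⟩
  · exact (secondPolar_F_neg_two (-1) μ 0 x y z).trans (by ring)
  · exact (secondPolar_F_neg_two_centroid (-1) μ 0).trans (by norm_num)
  · have ha : -1 * (-1 + 2 * μ) < 0 := by linarith
    have hb : μ * (2 * -1 + μ) < 0 := mul_neg_of_pos_of_neg (by linarith) (by linarith)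
    exact secondPolar_F_neg_two_neg ha hb hx hy
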